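/- arXiv:1312.7862 — 2 statements merged into one kernel-verified Lean document; each statement's English description precedes it below -/
import Mathlib

section
/- Let d ≥ 2 be an integer and S > 0, and set δ = S/(4√d). Let i ∈ H_d, let x ∈ ℝ^d with ‖x − i‖₂ ≤ 4/3, and let t ∈ T_i. Then for every j ∈ H_d with ‖j − i‖₂ > 5 and every s ∈ T_j, one has s − t ≤ (1 + ‖j‖₁ − ‖i‖₁)/S ≤ (1 + ‖j − i‖₂)/(4δ) ≤ (1 + 4/3 + ‖j − x‖₂)/(4δ) ≤ ‖j − x‖₂/(2δ). -/
/-!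
Since `1 / (4δ) = √d / S`, the second inequality reduces to
`‖j‖₁ - ‖i‖₁ ≤ ‖j - i‖₁ ≤ √d ‖j - i‖₂` (Cauchy–Schwarz, `normOneR_le_sqrt_mul_normTwoR`)
together with `1 ≤ √d`. The third and fourth follow from
`‖j - i‖₂ ≤ ‖j - x‖₂ + 4/3` (`normTwoR_triangle`): as `‖j - i‖₂ > 5`, this forces
`‖j - x‖₂ > 11/3 ≥ 1 + 4/3`. The first compares the upper
endpoint of `T_j` with the lower endpoint of `T_i`.
-/

open Finset

/-- ℓ1 norm of a vector of `ℝ^d`. -/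
noncomputable def normOneR {d : ℕ} (x : Fin d → ℝ) : ℝ := ∑ m, |x m|

/-- Euclidean (ℓ2) norm of a vector of `ℝ^d`. -/
noncomputable def normTwoR {d : ℕ} (x : Fin d → ℝ) : ℝ := Real.sqrt (∑ m, (x m) ^ 2)

/-- The canonical embedding of `ℤ^d` into `ℝ^d`. -/
def toR {d : ℕ} (x : Fin d → ℤ) : Fin d → ℝ := fun m => (x m : ℝ)

/-- `i ∈ H_d`: the last `d − 2` coordinates of `i ∈ ℤ^d` vanish. -/
def memH {d : ℕ} (i : Fin d → ℤ) : Prop := ∀ m : Fin d, 2 ≤ (m : ℕ) → i m = 0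

/-- Membership in the time interval `T_i = [‖i‖₁/S, (‖i‖₁+1)/S]`. -/
def memT {d : ℕ} (S : ℝ) (i : Fin d → ℤ) (t : ℝ) : Prop :=
  normOneR (toR i) / S ≤ t ∧ t ≤ (normOneR (toR i) + 1) / S

/-- `normTwoR` is the norm of `EuclideanSpace`, which provides the triangle inequality. -/
lemma normTwoR_eq_norm {d : ℕ} (x : Fin d → ℝ) : normTwoR x = ‖WithLp.toLp 2 x‖ := by
  simp [normTwoR, EuclideanSpace.norm_eq]

lemma normTwoR_triangle {d : ℕ} (a b c : Fin d → ℝ) :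
    normTwoR (a - c) ≤ normTwoR (a - b) + normTwoR (b - c) := by
  simp only [normTwoR_eq_norm, WithLp.toLp_sub]
  exact norm_sub_le_norm_sub_add_norm_sub _ _ _

lemma normOneR_sub_le {d : ℕ} (a b : Fin d → ℝ) :
    normOneR a - normOneR b ≤ normOneR (a - b) := by
  simp only [normOneR, ← Finset.sum_sub_distrib]
  exact Finset.sum_le_sum fun m _ => abs_sub_abs_le_abs_sub (a m) (b m)

/-- Cauchy–Schwarz comparison of the ℓ1 and ℓ2 norms. -/
lemma normOneR_le_sqrt_mul_normTwoR {d : ℕ} (a : Fin d → ℝ) :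
    normOneR a ≤ Real.sqrt d * normTwoR a := by
  rw [normOneR, normTwoR, ← Real.sqrt_mul (Nat.cast_nonneg d)]
  apply Real.le_sqrt_of_sq_le
  simpa using sq_sum_le_card_mul_sum_sq (s := Finset.univ) (f := fun m => |a m|)

/-- for `d ≥ 2`, `S > 0`, `δ = S/(4√d)`, `i ∈ H_d`, `x ∈ ℝ^d` with
`‖x − i‖₂ ≤ 4/3` and `t ∈ T_i`, every `j ∈ H_d` with `‖j − i‖₂ > 5` and every `s ∈ T_j`
satisfy the chain
`s − t ≤ (1 + ‖j‖₁ − ‖i‖₁)/S ≤ (1 + ‖j − i‖₂)/(4δ) ≤ (1 + 4/3 + ‖j − x‖₂)/(4δ)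
  ≤ ‖j − x‖₂/(2δ)`. -/
theorem cone_inequality_chain_continuous
    (d : ℕ) (hd : 2 ≤ d) (S : ℝ) (hS : 0 < S)
    (δ : ℝ) (hδ : δ = S / (4 * Real.sqrt d))
    (i : Fin d → ℤ) (hi : memH i)
    (x : Fin d → ℝ) (hx : normTwoR (x - toR i) ≤ 4 / 3)
    (t : ℝ) (ht : memT S i t)
    (j : Fin d → ℤ) (hj : memH j) (hfar : 5 < normTwoR (toR j - toR i))
    (s : ℝ) (hs : memT S j s) :
    s - t ≤ (1 + normOneR (toR j) - normOneR (toR i)) / S ∧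
    (1 + normOneR (toR j) - normOneR (toR i)) / S ≤ (1 + normTwoR (toR j - toR i)) / (4 * δ) ∧
    (1 + normTwoR (toR j - toR i)) / (4 * δ) ≤
      (1 + 4 / 3 + normTwoR (toR j - x)) / (4 * δ) ∧
    (1 + 4 / 3 + normTwoR (toR j - x)) / (4 * δ) ≤ normTwoR (toR j - x) / (2 * δ) := by
  have hd1 : (1 : ℝ) ≤ Real.sqrt d := Real.one_le_sqrt.mpr (by exact_mod_cast (by omega : 1 ≤ d))
  have hd0 : (0 : ℝ) < Real.sqrt d := by linarith
  have hδ0 : 0 < δ := by rw [hδ]; positivity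
  have hδ4 : 4 * δ = S / Real.sqrt d := by rw [hδ]; field_simp
  have htri := normTwoR_triangle (toR j) x (toR i)
  refine ⟨?_, ?_, ?_, ?_⟩
  · calc s - t ≤ (normOneR (toR j) + 1) / S - normOneR (toR i) / S := sub_le_sub hs.2 ht.1
      _ = (1 + normOneR (toR j) - normOneR (toR i)) / S := by ring
  · rw [hδ4, div_div_eq_mul_div]
    gcongr
    have h1 := normOneR_sub_le (toR j) (toR i)
    have h2 := normOneR_le_sqrt_mul_normTwoR (toR j - toR i)
    linarith
  · gcongr ?_ / _
    linarith
  -- The triangle inequality gives `‖j - x‖₂ > 5 - 4/3 = 11/3`, which exceeds `1 + 4/3`.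
  · rw [div_le_div_iff₀ (by positivity) (by positivity)]
    nlinarith
end

section
/- Let m ≥ k ≥ 0 be integers and let a_0, a_1, …, a_m be points of ℤ² with a_0 = 0, ‖a_j‖₁ = j for every 0 ≤ j ≤ m, and ‖a_{j+1} − a_j‖₁ = 1 for every 0 ≤ j < m. Then for every i ∈ ℤ² with ‖i‖₁ = k, one has ‖a_k − i‖₁ ≤ 2‖a_m − i‖₁. -/
/-!
Since consecutive points are at distance 1, `‖a_m - a_k‖₁ ≤ m - k`; and since `a_m` lies at level `m`
while `i` lies at level `k`, the reverse triangle inequality gives `m - k ≤ ‖a_m - i‖₁`. Hence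
`‖a_k - i‖₁ ≤ ‖a_m - a_k‖₁ + ‖a_m - i‖₁ ≤ 2‖a_m - i‖₁`.
-/

/-- ℓ1 norm on `ℤ²`. -/
def l1 (p : ℤ × ℤ) : ℤ := |p.1| + |p.2|

theorem l1_add_le (p q : ℤ × ℤ) : l1 (p + q) ≤ l1 p + l1 q := by
  have h1 := abs_add_le p.1 q.1
  have h2 := abs_add_le p.2 q.2
  simp only [l1, Prod.fst_add, Prod.snd_add]
  linarith

theorem l1_neg (p : ℤ × ℤ) : l1 (-p) = l1 p := by
  simp [l1]

theorem l1_sub_le_of_steps (a : ℕ → ℤ × ℤ) (k d : ℕ)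
    (hstep : ∀ j < k + d, l1 (a (j + 1) - a j) = 1) :
    l1 (a (k + d) - a k) ≤ (d : ℤ) := by
  induction d with
  | zero => simp [l1]
  | succ d ih =>
    have hprev := ih fun j hj => hstep j (by omega)
    have hlast := hstep (k + d) (by omega)
    have htri := l1_add_le (a (k + d + 1) - a (k + d)) (a (k + d) - a k)
    rw [sub_add_sub_cancel] at htri
    rw [← add_assoc]
    push_cast
    linarith

/-- if `a_0 = 0, a_1, …, a_m` is an oriented lattice path in `ℤ²`
(`‖a_j‖₁ = j` and consecutive points at ℓ1-distance 1), then for every `k ≤ m` and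
every `i ∈ ℤ²` with `‖i‖₁ = k`, one has `‖a_k − i‖₁ ≤ 2‖a_m − i‖₁`. -/
theorem oriented_path_localization
    (m k : ℕ) (hkm : k ≤ m) (a : ℕ → ℤ × ℤ)
    (h0 : a 0 = 0)
    (hlevel : ∀ j ≤ m, l1 (a j) = (j : ℤ))
    (hstep : ∀ j < m, l1 (a (j + 1) - a j) = 1)
    (i : ℤ × ℤ) (hi : l1 i = (k : ℤ)) :
    l1 (a k - i) ≤ 2 * l1 (a m - i) := by
  obtain ⟨d, rfl⟩ := Nat.exists_eq_add_of_le hkm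
  have hdist := l1_sub_le_of_steps a k d hstep
  have hm := hlevel (k + d) le_rfl
  have hrev := l1_add_le (a (k + d) - i) i
  rw [sub_add_cancel, hm, hi] at hrev
  have htri := l1_add_le (-(a (k + d) - a k)) (a (k + d) - i)
  rw [l1_neg, neg_sub, sub_add_sub_cancel] at htri
  push_cast at hrev
  linarith
end
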